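/- (Theorem 4.3, first identity.) In U(gl(m,ℂ)), for every q ≥ 0 and all 1 ≤ k,l ≤ m, Σ_{p=0}^q binom(q,p)·(−m)^{q−p}·ẽ_{kl}^p = (−1)^q · Σ_{p=0}^q K_{q−p}(−c)·e_{lk}^p (note the transposed indices l,k on the right-hand side). -/

import Mathlib

/-!
Collect the `e_{kl}` into one matrix `F` over `U(gl(m,ℂ))`, so that `e_{kl}^q` and `ẽ_{kl}^q` are
the entries of `F ^ q` and `(-Fᵀ) ^ q`. The binomial theorem turns the left-hand side into an entry
of `(-(Fᵀ + m)) ^ q`. Since `ad e_{ij}` acts on the entries of `F ^ p` as it does on those of `F`,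
moving `F` across `F ^ p` gives `(Fᵀ + m) (F ^ p)ᵀ = (F ^ (p + 1))ᵀ + c_p`. The `K_n(-c)` are
central, so iterating this relation produces exactly their defining recursion.
-/

open Finset

attribute [local instance 100] LieRing.ofAssociativeRing

/-- `gl(m, ℂ)`: the Lie algebra of `m × m` complex matrices. -/
abbrev glm (m : ℕ) := Matrix (Fin m) (Fin m) ℂ

/-- The universal enveloping algebra `U(gl(m,ℂ))`. -/
abbrev UEA (m : ℕ) := UniversalEnvelopingAlgebra ℂ (glm m)

/-- The image of the matrix unit `e_{kl}` in `U(gl(m,ℂ))`. -/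
noncomputable def E {m : ℕ} (k l : Fin m) : UEA m :=
  UniversalEnvelopingAlgebra.ι ℂ (Matrix.single k l (1 : ℂ))

/-- `e_{kl}^q`, defined by `e_{kl}^0 = δ_{kl}` and `e_{kl}^{q+1} = Σ_i e_{ki} e_{il}^q`. -/
noncomputable def Epow {m : ℕ} : ℕ → Fin m → Fin m → UEA m
  | 0, k, l => if k = l then 1 else 0
  | q + 1, k, l => ∑ i, E k i * Epow q i l

/-- `ẽ_{kl}^q`, defined by `ẽ_{kl}^0 = δ_{kl}` and `ẽ_{kl}^{q+1} = −Σ_i e_{ik} ẽ_{il}^q`. -/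
noncomputable def Etil {m : ℕ} : ℕ → Fin m → Fin m → UEA m
  | 0, k, l => if k = l then 1 else 0
  | q + 1, k, l => -∑ i, E i k * Etil q i l

/-- The Casimir element `c_q = Σ_k e_{kk}^q`. -/
noncomputable def Cas (m : ℕ) (q : ℕ) : UEA m := ∑ k : Fin m, Epow q k k

/-- The Casimir element `c̃_q = Σ_k ẽ_{kk}^q`. -/
noncomputable def CasT (m : ℕ) (q : ℕ) : UEA m := ∑ k : Fin m, Etil q k k

/-- `K_n(−c) ∈ U(gl(m,ℂ))`: `K_0(−c) = 1` and `K_n(−c) = Σ_{p=0}^{n−1} K_p(−c)·c_{n−1−p}`. -/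
noncomputable def Kc (m : ℕ) : ℕ → UEA m
  | 0 => 1
  | n + 1 => ∑ p ∈ (Finset.range (n + 1)).attach, Kc m p.1 * Cas m (n - p.1)
  decreasing_by exact Finset.mem_range.mp p.2

open Matrix

section GlTensor

variable {n A : Type*} [DecidableEq n] [Ring A] {F X Y : Matrix n n A}

/-- `X` is a tensor operator of adjoint type for `F`: bracketing the entries of `X` with `F i j`
acts on them as the commutator with `e_{ij}` acts on matrix units. In particular `IsGlTensor F F`
says that the entries of `F` satisfy the commutation relations of `gl(n)`. -/
def IsGlTensor (F X : Matrix n n A) : Prop :=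
  ∀ i j k l, ⁅F i j, X k l⁆ = (if j = k then X i l else 0) - (if i = l then X k j else 0)

namespace IsGlTensor

theorem one : IsGlTensor F 1 := by
  intro i j k l
  have hlie : ⁅F i j, (1 : Matrix n n A) k l⁆ = 0 := by
    rw [one_apply]
    split_ifs <;> simp [Ring.lie_def]
  rw [hlie]
  simp only [one_apply, eq_comm (a := j) (b := k), ← ite_and, and_comm, sub_self]

variable [Fintype n]

theorem mul (hX : IsGlTensor F X) (hY : IsGlTensor F Y) : IsGlTensor F (X * Y) := by
  intro i j k l
  have leibniz (a : n) :
      ⁅F i j, X k a * Y a l⁆ = ⁅F i j, X k a⁆ * Y a l + X k a * ⁅F i j, Y a l⁆ := by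
    simp only [Ring.lie_def]
    noncomm_ring
  simp only [mul_apply, lie_sum, leibniz, hX i j, hY i j, sub_mul, mul_sub, ite_mul, mul_ite,
    zero_mul, mul_zero, sum_add_distrib, sum_sub_distrib, sum_ite_eq, mem_univ, if_true,
    sum_ite_irrel, sum_const_zero]
  abel

theorem pow (hX : IsGlTensor F X) (p : ℕ) : IsGlTensor F (X ^ p) := by
  induction p with
  | zero => simpa only [pow_zero] using one
  | succ p ih => simpa only [pow_succ] using ih.mul hX

theorem commute_trace (hX : IsGlTensor F X) (i j : n) : Commute (F i j) X.trace := by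
  rw [commute_iff_lie_eq]
  simp [trace, lie_sum, hX i j]

theorem transpose_add_card_mul_transpose (hX : IsGlTensor F X) :
    (Fᵀ + (Fintype.card n : Matrix n n A)) * Xᵀ = (X * F)ᵀ + X.trace • 1 := by
  have swap (k l i : n) :
      F i k * X l i = X l i * F i k + ((if k = l then X i i else 0) - X l k) := by
    rw [← sub_eq_iff_eq_add', ← Ring.lie_def, hX i k l i, if_pos rfl]
  have transpose_mul : Fᵀ * Xᵀ = (X * F)ᵀ + X.trace • 1 - Fintype.card n • Xᵀ := by
    ext k l
    by_cases hkl : k = l <;>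
      simp [mul_apply, swap, sum_add_distrib, trace, hkl, add_sub_assoc, ← sub_eq_add_neg,
        -nsmul_eq_mul]
  rw [add_mul, ← nsmul_eq_mul, transpose_mul, sub_add_cancel]

end IsGlTensor

end GlTensor

theorem matrix_mul_smul_of_commute {l m n A : Type*} [Fintype m] [NonUnitalSemiring A] {a : A}
    {M : Matrix l m A} (hM : ∀ i j, Commute (M i j) a) (N : Matrix m n A) :
    M * a • N = a • (M * N) := by
  ext i j
  simp only [mul_apply, Matrix.smul_apply, smul_eq_mul, mul_sum, ← mul_assoc, (hM i _).eq]

theorem commute_of_convolution_recursion {A : Type*} [Semiring A] {a : A} {c K : ℕ → A}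
    (hc : ∀ p, Commute a (c p)) (hK_zero : K 0 = 1)
    (hK_succ : ∀ r, K (r + 1) = ∑ x ∈ antidiagonal r, K x.1 * c x.2) (r : ℕ) :
    Commute a (K r) := by
  induction r using Nat.strong_induction_on with
  | _ r ih =>
    cases r with
    | zero => exact hK_zero ▸ Commute.one_right a
    | succ r =>
      rw [hK_succ]
      refine Commute.sum_right _ _ _ fun x hx => (ih x.1 ?_).mul_right (hc x.2)
      have hx_sum : x.1 + x.2 = r := mem_antidiagonal.mp hx
      omega

theorem add_algebraMap_pow {R B : Type*} [CommSemiring R] [Semiring B] [Algebra R B]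
    (x : B) (r : R) (q : ℕ) :
    (x + algebraMap R B r) ^ q
      = ∑ p ∈ range (q + 1), ((q.choose p : R) * r ^ (q - p)) • x ^ p := by
  rw [(Algebra.commute_algebraMap_right r x).add_pow]
  refine sum_congr rfl fun p _ => ?_
  rw [← Nat.cast_comm, ((Algebra.commute_algebraMap_right r x).pow_pow p (q - p)).eq, ← mul_assoc,
    Algebra.smul_def, map_mul, map_natCast, map_pow]

section GlMatrix

variable {A n : Type*} [Ring A] [Fintype n] [DecidableEq n] {F : Matrix n n A} {K : ℕ → A}

theorem IsGlTensor.transpose_add_card_pow (hF : IsGlTensor F F) (hK_zero : K 0 = 1)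
    (hK_succ : ∀ r, K (r + 1) = ∑ x ∈ antidiagonal r, K x.1 * (F ^ x.2).trace) (q : ℕ) :
    (Fᵀ + (Fintype.card n : Matrix n n A)) ^ q
      = ∑ x ∈ antidiagonal q, K x.1 • (F ^ x.2)ᵀ := by
  have hcomm (r : ℕ) (i j : n) :
      Commute ((Fᵀ + (Fintype.card n : Matrix n n A)) i j) (K r) := by
    have hFK : Commute (F j i) (K r) :=
      commute_of_convolution_recursion (fun p => (hF.pow p).commute_trace j i) hK_zero hK_succ r
    refine hFK.add_left ?_
    rw [Matrix.natCast_apply]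
    exact Nat.cast_commute _ _
  induction q with
  | zero => simp [hK_zero]
  | succ q ih =>
    calc (Fᵀ + (Fintype.card n : Matrix n n A)) ^ (q + 1)
      _ = ∑ x ∈ antidiagonal q, K x.1 • ((F ^ (x.2 + 1))ᵀ + (F ^ x.2).trace • 1) := by
        simp only [pow_succ', ih, mul_sum, matrix_mul_smul_of_commute (hcomm _),
          (hF.pow _).transpose_add_card_mul_transpose, ← pow_succ]
      _ = K (q + 1) • 1 + ∑ x ∈ antidiagonal q, K x.1 • (F ^ (x.2 + 1))ᵀ := by
        simp only [smul_add, smul_smul, sum_add_distrib, ← sum_smul, ← hK_succ, add_comm]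
      _ = ∑ x ∈ antidiagonal (q + 1), K x.1 • (F ^ x.2)ᵀ := by
        rw [Nat.sum_antidiagonal_succ', pow_zero, transpose_one]

theorem statement12_general {R : Type*} [CommRing R] [Algebra R A]
    (hF : IsGlTensor F F) (hK_zero : K 0 = 1)
    (hK_succ : ∀ r, K (r + 1) = ∑ x ∈ antidiagonal r, K x.1 * (F ^ x.2).trace)
    (q : ℕ) (k l : n) :
    ∑ p ∈ range (q + 1),
        ((q.choose p : R) * (-(Fintype.card n : R)) ^ (q - p)) • ((-Fᵀ) ^ p) k l
      = (-1 : R) ^ q • ∑ p ∈ range (q + 1), K (q - p) * (F ^ p) l k := by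
  have hpow : (-Fᵀ + algebraMap R (Matrix n n A) (-(Fintype.card n : R))) ^ q
      = (-1 : R) ^ q • ∑ x ∈ antidiagonal q, K x.1 • (F ^ x.2)ᵀ := by
    rw [map_neg, map_natCast, ← neg_add, ← neg_one_smul R, smul_pow,
      hF.transpose_add_card_pow hK_zero hK_succ]
  rw [add_algebraMap_pow, ← Nat.sum_antidiagonal_swap,
    Nat.sum_antidiagonal_eq_sum_range_succ_mk] at hpow
  simpa only [Matrix.sum_apply, Matrix.smul_apply, transpose_apply, Prod.fst_swap, Prod.snd_swap,
    smul_eq_mul] using congr_fun₂ hpow k l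

end GlMatrix

/-- The matrix over `U(gl(m,ℂ))` whose `(k, l)` entry is the generator `e_{kl}`. -/
noncomputable def generatorMatrix (m : ℕ) : Matrix (Fin m) (Fin m) (UEA m) :=
  of E

theorem isGlTensor_generatorMatrix (m : ℕ) :
    IsGlTensor (generatorMatrix m) (generatorMatrix m) := by
  intro i j k l
  have hsingle : ⁅(single i j 1 : glm m), (single k l 1 : glm m)⁆
      = (if j = k then single i l 1 else 0) - (if i = l then single k j 1 else 0) := by
    rw [Ring.lie_def]
    congr 1
    · split_ifs with hjk <;> simp [hjk]
    · split_ifs with hil <;> simp [hil, eq_comm (a := l)]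
  simp only [generatorMatrix, of_apply, E]
  rw [← LieHom.map_lie, hsingle, map_sub, apply_ite (UniversalEnvelopingAlgebra.ι ℂ),
    apply_ite (UniversalEnvelopingAlgebra.ι ℂ), map_zero]

theorem Epow_eq_pow {m : ℕ} (q : ℕ) (k l : Fin m) : Epow q k l = (generatorMatrix m ^ q) k l := by
  induction q generalizing k with
  | zero => simp only [Epow, pow_zero, one_apply]
  | succ q ih => simp only [Epow, ih, pow_succ', mul_apply, generatorMatrix, of_apply]

theorem Etil_eq_pow {m : ℕ} (q : ℕ) (k l : Fin m) :
    Etil q k l = ((-(generatorMatrix m)ᵀ) ^ q) k l := by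
  induction q generalizing k with
  | zero => simp only [Etil, pow_zero, one_apply]
  | succ q ih =>
    simp only [Etil, ih, pow_succ', mul_apply, Matrix.neg_apply, transpose_apply, neg_mul,
      sum_neg_distrib, generatorMatrix, of_apply]

theorem Kc_succ (m r : ℕ) :
    Kc m (r + 1) = ∑ x ∈ antidiagonal r, Kc m x.1 * (generatorMatrix m ^ x.2).trace := by
  rw [Kc, sum_attach (range (r + 1)) fun p => Kc m p * Cas m (r - p),
    ← Nat.sum_antidiagonal_eq_sum_range_succ fun p s => Kc m p * Cas m s]
  simp only [Cas, Epow_eq_pow, trace, diag_apply]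

/-- Theorem 4.3, first identity:
`Σ_{p=0}^q C(q,p) (−m)^{q−p} ẽ_{kl}^p = (−1)^q Σ_{p=0}^q K_{q−p}(−c) e_{lk}^p`. -/
theorem statement12 (m : ℕ) (hm : 1 ≤ m) (q : ℕ) (k l : Fin m) :
    ∑ p ∈ Finset.range (q + 1), ((q.choose p : ℂ) * (-(m : ℂ)) ^ (q - p)) • Etil p k l
      = (-1 : ℂ) ^ q • ∑ p ∈ Finset.range (q + 1), Kc m (q - p) * Epow p l k := by
  simpa only [Etil_eq_pow, Epow_eq_pow, Fintype.card_fin] using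
    statement12_general (R := ℂ) (isGlTensor_generatorMatrix m) (by rw [Kc]) (Kc_succ m) q k l
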